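/- Properties of the checkers type preorder: (1) Compatibility: for checkers terms t, u, if ⟦t⟧⊛ ⊆ ⟦u⟧⊛ then ⟦C⟨t⟩⟧⊛ ⊆ ⟦C⟨u⟩⟧⊛ for every checkers context C; (2) Silent β-invariance: if t →τ u then ⟦t⟧⊛ = ⟦u⟧⊛. -/

import Mathlib

set_option autoImplicit false

/-! ### Players -/

inductive Player : Type
  | white
  | black
deriving DecidableEq

/-- The opposite player. -/
def Player.op : Player → Player
  | .white => .black
  | .black => .white

/-- `gamma p q` is `0` if the players agree (silent) and `1` otherwise (interaction). -/
def Player.gamma (p q : Player) : ℕ := if p = q then 0 else 1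

/-! ### Ordinary λ-terms (de Bruijn representation) -/

inductive Lam : Type
  | var : ℕ → Lam
  | lam : Lam → Lam
  | app : Lam → Lam → Lam
deriving DecidableEq

namespace Lam

/-- Shift the free de Bruijn indices ≥ `d` by one. -/
def liftAt : Lam → ℕ → Lam
  | .var n, d => .var (if n < d then n else n + 1)
  | .lam t, d => .lam (t.liftAt (d + 1))
  | .app t u, d => .app (t.liftAt d) (u.liftAt d)

/-- Capture-avoiding substitution of `u` for the de Bruijn index `x`. -/
def subst : Lam → ℕ → Lam → Lam
  | .var n, x, u => if n = x then u else if x < n then .var (n - 1) else .var n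
  | .lam t, x, u => .lam (t.subst (x + 1) (u.liftAt 0))
  | .app t s, x, u => .app (t.subst x u) (s.subst x u)

end Lam

/-- Root β-rule: `(λx.t) u ↦ t[x:=u]`. -/
inductive LBetaRoot : Lam → Lam → Prop
  | beta (t u : Lam) : LBetaRoot (.app (.lam t) u) (t.subst 0 u)

/-- Root η-rule: `λx. t x ↦ t` with `x ∉ FV(t)` (enforced by the lifting). -/
inductive LEtaRoot : Lam → Lam → Prop
  | eta (t : Lam) : LEtaRoot (.lam (.app (t.liftAt 0) (.var 0))) t

/-- Closure of a root relation under all contexts. -/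
inductive LFull (R : Lam → Lam → Prop) : Lam → Lam → Prop
  | root {t u : Lam} : R t u → LFull R t u
  | lam {t u : Lam} : LFull R t u → LFull R (.lam t) (.lam u)
  | appL {t t' : Lam} (u : Lam) : LFull R t t' → LFull R (.app t u) (.app t' u)
  | appR (t : Lam) {u u' : Lam} : LFull R u u' → LFull R (.app t u) (.app t u')

/-- Closure under applicative spine contexts `⟨·⟩ t1 … tk`. -/
inductive LSpine (R : Lam → Lam → Prop) : Lam → Lam → Prop
  | root {t u : Lam} : R t u → LSpine R t u
  | appL {t t' : Lam} (u : Lam) : LSpine R t t' → LSpine R (.app t u) (.app t' u)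

/-- Closure under head contexts `λx1…xn.⟨·⟩ t1 … tk`. -/
inductive LHead (R : Lam → Lam → Prop) : Lam → Lam → Prop
  | spine {t u : Lam} : LSpine R t u → LHead R t u
  | lam {t u : Lam} : LHead R t u → LHead R (.lam t) (.lam u)

/-- β-reduction. -/
def LBeta : Lam → Lam → Prop := LFull LBetaRoot
/-- η-reduction. -/
def LEta : Lam → Lam → Prop := LFull LEtaRoot
/-- Head reduction. -/
def LHStep : Lam → Lam → Prop := LHead LBetaRoot
/-- Multistep head reduction. -/
def LHSteps : Lam → Lam → Prop := Relation.ReflTransGen LHStep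

/-- β-conversion (reflexive-symmetric-transitive closure of β-reduction). -/
def LBetaConv : Lam → Lam → Prop :=
  Relation.ReflTransGen (fun a b => LBeta a b ∨ LBeta b a)
/-- η-conversion. -/
def LEtaConv : Lam → Lam → Prop :=
  Relation.ReflTransGen (fun a b => LEta a b ∨ LEta b a)

/-- Head normal forms: no head step out of `t`. -/
def Lam.LHNF (t : Lam) : Prop := ∀ u, ¬ LHStep t u

/-- Head convergence: `t ⇓h`. -/
def Lam.HConv (t : Lam) : Prop := ∃ h, LHSteps t h ∧ h.LHNF

/-- Ordinary contexts (one hole). -/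
inductive LCtx : Type
  | hole : LCtx
  | lam : LCtx → LCtx
  | appL : LCtx → Lam → LCtx
  | appR : Lam → LCtx → LCtx

/-- Plugging (allowing variable capture). -/
def LCtx.fill : LCtx → Lam → Lam
  | .hole, t => t
  | .lam C, t => .lam (C.fill t)
  | .appL C u, t => .app (C.fill t) u
  | .appR s C, t => .app s (C.fill t)

/-- Head contextual preorder on λ-terms. -/
def CtxLe (t u : Lam) : Prop := ∀ C : LCtx, (C.fill t).HConv → (C.fill u).HConv

/-! ### Checkers terms -/

inductive CTerm : Type
  | var : ℕ → CTerm
  | lam : Player → CTerm → CTerm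
  | app : Player → CTerm → CTerm → CTerm
deriving DecidableEq

namespace CTerm

/-- Shift the free de Bruijn indices ≥ `d` by one. -/
def liftAt : CTerm → ℕ → CTerm
  | .var n, d => .var (if n < d then n else n + 1)
  | .lam p t, d => .lam p (t.liftAt (d + 1))
  | .app p t u, d => .app p (t.liftAt d) (u.liftAt d)

/-- Capture-avoiding substitution of `u` for the de Bruijn index `x`. -/
def subst : CTerm → ℕ → CTerm → CTerm
  | .var n, x, u => if n = x then u else if x < n then .var (n - 1) else .var n
  | .lam p t, x, u => .lam p (t.subst (x + 1) (u.liftAt 0))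
  | .app p t s, x, u => .app p (t.subst x u) (s.subst x u)

/-- The underlying ordinary λ-term of a checkers term. -/
def untag : CTerm → Lam
  | .var n => .var n
  | .lam _ t => .lam t.untag
  | .app _ t u => .app t.untag u.untag

end CTerm

/-- Player lifting: tag every abstraction and application with player `p`. -/
def Lam.tag : Lam → Player → CTerm
  | .var n, _ => .var n
  | .lam t, p => .lam p (t.tag p)
  | .app t u, p => .app p (t.tag p) (u.tag p)

/-- Silent β root rule: the abstraction and the application carry the same player. -/
inductive SilentRoot : CTerm → CTerm → Prop
  | beta (p : Player) (t u : CTerm) : SilentRoot (.app p (.lam p t) u) (t.subst 0 u)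

/-- Interaction β root rule: the application carries the opposite player of the abstraction. -/
inductive InterRoot : CTerm → CTerm → Prop
  | beta (p : Player) (t u : CTerm) : InterRoot (.app p.op (.lam p t) u) (t.subst 0 u)

/-- Closure of a root relation under all checkers contexts. -/
inductive CFull (R : CTerm → CTerm → Prop) : CTerm → CTerm → Prop
  | root {t u : CTerm} : R t u → CFull R t u
  | lam (p : Player) {t u : CTerm} : CFull R t u → CFull R (.lam p t) (.lam p u)
  | appL (p : Player) {t t' : CTerm} (u : CTerm) : CFull R t t' → CFull R (.app p t u) (.app p t' u)
  | appR (p : Player) (t : CTerm) {u u' : CTerm} : CFull R u u' → CFull R (.app p t u) (.app p t u')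

/-- Closure under applicative spine contexts `⟨·⟩ @_{q1} t1 … @_{qk} tk`. -/
inductive CSpine (R : CTerm → CTerm → Prop) : CTerm → CTerm → Prop
  | root {t u : CTerm} : R t u → CSpine R t u
  | appL (p : Player) {t t' : CTerm} (u : CTerm) : CSpine R t t' → CSpine R (.app p t u) (.app p t' u)

/-- Closure under checkers head contexts `λ_{p1}x1…λ_{pn}xn.⟨·⟩ @_{q1} t1 … @_{qk} tk`. -/
inductive CHead (R : CTerm → CTerm → Prop) : CTerm → CTerm → Prop
  | spine {t u : CTerm} : CSpine R t u → CHead R t u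
  | lam (p : Player) {t u : CTerm} : CHead R t u → CHead R (.lam p t) (.lam p u)

/-- Silent β-reduction `→τ`. -/
def StepTau : CTerm → CTerm → Prop := CFull SilentRoot
/-- Interaction β-reduction `→⊛`. -/
def StepInt : CTerm → CTerm → Prop := CFull InterRoot
/-- Checkers β-reduction `→βch`. -/
def StepBch (t u : CTerm) : Prop := StepTau t u ∨ StepInt t u

/-- Silent head reduction `→hτ`. -/
def HStepTau : CTerm → CTerm → Prop := CHead SilentRoot
/-- Interaction head reduction `→h⊛`. -/
def HStepInt : CTerm → CTerm → Prop := CHead InterRoot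
/-- Checkers head reduction `→hch`. -/
def HStepCh (t u : CTerm) : Prop := HStepTau t u ∨ HStepInt t u

/-- Checkers head normal form. -/
def CTerm.HNF (t : CTerm) : Prop := ∀ u, ¬ HStepCh t u

/-- `BigStep t k` means `t ⇓^k`: the (deterministic) checkers head evaluation of `t`
terminates and performs exactly `k` interaction steps. -/
inductive BigStep : CTerm → ℕ → Prop
  | nf {t : CTerm} : t.HNF → BigStep t 0
  | silent {t u : CTerm} {k : ℕ} : HStepTau t u → BigStep u k → BigStep t k
  | inter {t u : CTerm} {k : ℕ} : HStepInt t u → BigStep u k → BigStep t (k + 1)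

/-- `HRed t n i u`: a checkers head reduction sequence from `t` to `u` of length `n`
containing exactly `i` interaction steps. -/
inductive HRed : CTerm → ℕ → ℕ → CTerm → Prop
  | refl (t : CTerm) : HRed t 0 0 t
  | silent {t u s : CTerm} {n i : ℕ} : HStepTau t u → HRed u n i s → HRed t (n + 1) i s
  | inter {t u s : CTerm} {n i : ℕ} : HStepInt t u → HRed u n i s → HRed t (n + 1) (i + 1) s

/-- Checkers contexts (one hole). -/
inductive CCtx : Type
  | hole : CCtx
  | lam : Player → CCtx → CCtx
  | appL : Player → CCtx → CTerm → CCtx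
  | appR : Player → CTerm → CCtx → CCtx

/-- Plugging (allowing variable capture). -/
def CCtx.fill : CCtx → CTerm → CTerm
  | .hole, t => t
  | .lam p C, t => .lam p (C.fill t)
  | .appL p C u, t => .app p (C.fill t) u
  | .appR p s C, t => .app p s (C.fill t)

/-- Player lifting of ordinary contexts. -/
def LCtx.tag : LCtx → Player → CCtx
  | .hole, _ => .hole
  | .lam C, p => .lam p (C.tag p)
  | .appL C u, p => .appL p (C.tag p) (u.tag p)
  | .appR s C, p => .appR p (s.tag p) (C.tag p)

/-- Checkers interaction preorder `≼ctx⊛` on checkers terms. -/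
def IntCtxLe (t u : CTerm) : Prop :=
  ∀ (C : CCtx) (k : ℕ), BigStep (C.fill t) k → BigStep (C.fill u) k

/-- Checkers interaction improvement `≼imp⊛` on checkers terms. -/
def ImpCtxLe (t u : CTerm) : Prop :=
  ∀ (C : CCtx) (k : ℕ), BigStep (C.fill t) k → ∃ k', k' ≤ k ∧ BigStep (C.fill u) k'

/-- Interaction preorder `⊑int` on ordinary λ-terms, via black lifting. -/
def IntLe (t u : Lam) : Prop := IntCtxLe (t.tag .black) (u.tag .black)

/-- Interaction improvement `⊑int·imp` on ordinary λ-terms, via black lifting. -/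
def ImpLe (t u : Lam) : Prop := ImpCtxLe (t.tag .black) (u.tag .black)

/-- Interaction equivalence `≡int`. -/
def IntEq (t u : Lam) : Prop := IntLe t u ∧ IntLe u t

/-- Silent conversion `=τ`: reflexive-symmetric-transitive closure of `→τ`. -/
def SilentConv : CTerm → CTerm → Prop :=
  Relation.ReflTransGen (fun a b => StepTau a b ∨ StepTau b a)


/-! ### Checkers multi types -/

/-- Linear types: an atom `X` and arrows `M →_{p,q} L`, where a multi type `M`
is a finite multiset of linear types (syntactically represented as a list). -/
inductive LType : Type
  | atom : LType
  | arrow : List LType → Player → Player → LType → LType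

/-- Type environments: a multi type for every de Bruijn index. -/
abbrev TEnv : Type := ℕ → Multiset LType

/-- The empty type environment. -/
def TEnv.zero : TEnv := fun _ => 0

/-- Pointwise multiset union of type environments. -/
def TEnv.add (Γ Δ : TEnv) : TEnv := fun n => Γ n + Δ n

/-- The environment assigning `[L]` to `x` and `0` elsewhere. -/
def TEnv.single (x : ℕ) (L : LType) : TEnv := fun n => if n = x then {L} else 0

/-- Extend an environment with a multi type for the freshly bound de Bruijn index `0`. -/
def TEnv.cons (M : Multiset LType) (Γ : TEnv) : TEnv := fun n =>
  match n with
  | 0 => M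
  | n + 1 => Γ n

mutual
  /-- Type derivations `π ▷ Γ ⊢^k t : L` of the checkers multi type system. -/
  inductive Deriv : TEnv → ℕ → CTerm → LType → Type
    | ax (x : ℕ) (L : LType) : Deriv (TEnv.single x L) 0 (.var x) L
    | lam {Γ : TEnv} {k : ℕ} {t : CTerm} {L : LType} (p q : Player) (M : List LType) :
        Deriv (TEnv.cons (Multiset.ofList M) Γ) k t L →
        Deriv Γ k (.lam p t) (.arrow M p q L)
    | app {Γ Δ : TEnv} {k₁ k₂ : ℕ} {t u : CTerm} {M : List LType} {p q : Player} {L : LType} :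
        Deriv Γ k₁ t (.arrow M p q L) → DerivM Δ k₂ u M →
        Deriv (TEnv.add Γ Δ) (k₁ + k₂ + Player.gamma p q) (.app q t u) L
  /-- Derivations `Γ ⊢^k t : M` of a multi type (the `many` rule). -/
  inductive DerivM : TEnv → ℕ → CTerm → List LType → Type
    | nil (t : CTerm) : DerivM TEnv.zero 0 t []
    | cons {Γ Δ : TEnv} {k k' : ℕ} {t : CTerm} {L : LType} {M : List LType} :
        Deriv Γ k t L → DerivM Δ k' t M → DerivM (TEnv.add Γ Δ) (k + k') t (L :: M)
end

mutual
  /-- The (applicative) size `|π|` of a derivation: its number of `@` rules. -/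
  def Deriv.size {Γ : TEnv} {k : ℕ} {t : CTerm} {L : LType} : Deriv Γ k t L → ℕ
    | .ax _ _ => 0
    | .lam _ _ _ π => Deriv.size π
    | .app π μ => Deriv.size π + DerivM.size μ + 1
  /-- Size of a multi-type derivation. -/
  def DerivM.size {Γ : TEnv} {k : ℕ} {t : CTerm} {M : List LType} : DerivM Γ k t M → ℕ
    | .nil _ => 0
    | .cons π μ => Deriv.size π + DerivM.size μ
end

/-- Typability `Γ ⊢^k t : L`. -/
def TJ (Γ : TEnv) (k : ℕ) (t : CTerm) (L : LType) : Prop := Nonempty (Deriv Γ k t L)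

/-- Checkers relational interpretation `⟦t⟧⊛ = {(Γ, k, L) | Γ ⊢^k t : L}`. -/
def CSem (t : CTerm) : Set (TEnv × ℕ × LType) := {x | TJ x.1 x.2.1 t x.2.2}

/-- Black type preorder `⊑•type` on ordinary λ-terms. -/
def BTypeLe (t u : Lam) : Prop := CSem (t.tag .black) ⊆ CSem (u.tag .black)

/-! ### Tight typings -/

/-- All arrows occurring in a linear type are silent (`p = q`). -/
inductive AllSilent : LType → Prop
  | atom : AllSilent .atom
  | arrow {M : List LType} {p : Player} {L : LType} :
      (∀ L' ∈ M, AllSilent L') → AllSilent L → AllSilent (.arrow M p p L)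

/-- The number of nonempty multi types occurring in a linear type. -/
def LType.neCount : LType → ℕ
  | .atom => 0
  | .arrow M _ _ L =>
      min M.length 1 + (M.attach.map fun x => LType.neCount x.1).sum + LType.neCount L
decreasing_by
  · have := List.sizeOf_lt_of_mem x.2
    simp only [LType.arrow.sizeOf_spec]
    omega
  · simp only [LType.arrow.sizeOf_spec]
    omega

/-- The number of nonempty multi types occurring in a multi type (counting itself). -/
def mNeCount (m : Multiset LType) : ℕ :=
  min (Multiset.card m) 1 + (m.map LType.neCount).sum

/-- A typing `(Γ, L)` is tight when all the multi types occurring in `Γ` and `L`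
are empty except for exactly one, and all arrows occurring in `(Γ, L)` are silent. -/
def Tight (Γ : TEnv) (L : LType) : Prop :=
  AllSilent L ∧ (∀ n : ℕ, ∀ L' ∈ Γ n, AllSilent L') ∧
    ∃ S : Finset ℕ, (∀ n : ℕ, n ∉ S → Γ n = 0) ∧
      (∑ n ∈ S, mNeCount (Γ n)) + LType.neCount L = 1

/-!
Read a typing `Γ ⊢^k t : L` as a point `(Γ, k)` of the commutative monoid `TEnv × ℕ`. Pointwise
addition makes the sets of such points a commutative monoid too, in which the rule `many` is
literally a finite sum, `⟦t⟧ [L₁, …, Lₙ] = ⟦t⟧ L₁ + ⋯ + ⟦t⟧ Lₙ`. So `⟦·⟧` is compositional, with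
monotone operations, which gives compatibility. Substituting `u` for `x` in `t` turns
every typing `(Γ, k)` of `t` into the set `{(Γ ∖ x, k)} + ⟦u⟧ (Γ x)`. This is additive in `(Γ, k)`,
hence commutes with `many`, and for `x = 0` it is what typing the silent redex `(λ_p t) @_p u`
amounts to.
-/

section Interpretation

open scoped Pointwise

namespace TEnv

theorem cons_add_cons (M N : Multiset LType) (Γ Δ : TEnv) :
    cons M Γ + cons N Δ = cons (M + N) (Γ + Δ) := by
  funext n
  cases n <;> rfl

theorem cons_inj {M N : Multiset LType} {Γ Δ : TEnv} :
    cons M Γ = cons N Δ ↔ M = N ∧ Γ = Δ :=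
  ⟨fun h => ⟨congrFun h 0, funext fun n => congrFun h (n + 1)⟩, by rintro ⟨rfl, rfl⟩; rfl⟩

theorem exists_eq_cons (Γ : TEnv) : ∃ M Δ, Γ = cons M Δ :=
  ⟨Γ 0, fun n => Γ (n + 1), funext fun n => by cases n <;> rfl⟩

/-- The weakening of an environment by a fresh variable with de Bruijn index `d`: the multi types
of the indices `≥ d` move up by one and `d` gets the empty multi type. -/
def insertZero (d : ℕ) : TEnv →+ TEnv where
  toFun Γ n := if n < d then Γ n else if n = d then 0 else Γ (n - 1)
  map_zero' := by funext n; simp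
  map_add' Γ Δ := by funext n; simp only [Pi.add_apply]; split_ifs <;> simp

/-- The environment `Γ ∖ x`: the de Bruijn index `x` is forgotten and those above it move down by
one. -/
def erase (x : ℕ) : TEnv →+ TEnv where
  toFun Γ n := Γ (if n < x then n else n + 1)
  map_zero' := rfl
  map_add' _ _ := rfl

theorem insertZero_apply (d : ℕ) (Γ : TEnv) (n : ℕ) :
    insertZero d Γ n = if n < d then Γ n else if n = d then 0 else Γ (n - 1) := rfl

theorem erase_apply (x : ℕ) (Γ : TEnv) (n : ℕ) :
    erase x Γ n = Γ (if n < x then n else n + 1) := rfl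

theorem insertZero_single (d n : ℕ) (L : LType) :
    insertZero d (single n L) = single (if n < d then n else n + 1) L := by
  funext m
  simp only [insertZero_apply, single]
  split_ifs <;> first | rfl | omega

theorem insertZero_zero (Γ : TEnv) : insertZero 0 Γ = cons 0 Γ := by
  funext n
  cases n <;> simp [insertZero_apply, cons]

theorem insertZero_succ_cons (d : ℕ) (M : Multiset LType) (Γ : TEnv) :
    insertZero (d + 1) (cons M Γ) = cons M (insertZero d Γ) := by
  funext n
  rcases n with _ | _ | n
  · simp [insertZero_apply, cons]
  · cases d <;> simp [insertZero_apply, cons]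
  · simp [insertZero_apply, cons]

theorem erase_single_self (x : ℕ) (L : LType) : erase x (single x L) = 0 := by
  funext n
  simp only [erase_apply, single]
  split_ifs <;> first | rfl | omega

theorem erase_single_of_ne {x n : ℕ} (h : n ≠ x) (L : LType) :
    erase x (single n L) = single (if x < n then n - 1 else n) L := by
  funext m
  simp only [erase_apply, single]
  split_ifs <;> first | rfl | omega

theorem erase_succ_cons (x : ℕ) (M : Multiset LType) (Γ : TEnv) :
    erase (x + 1) (cons M Γ) = cons M (erase x Γ) := by
  funext n
  cases n with
  | zero => simp [erase_apply, cons]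
  | succ n =>
    simp only [erase_apply, cons, Nat.add_lt_add_iff_right]
    split_ifs <;> rfl

end TEnv

/-- Weighted environments `(Γ, k)`: all of a judgement `Γ ⊢^k t : L` except its subject `t` and its
type `L`. -/
abbrev WEnv : Type := TEnv × ℕ

namespace WEnv

/-- `TEnv.cons` on weighted environments, with the weight kept. -/
def cons (M : Multiset LType) (w : WEnv) : WEnv := (TEnv.cons M w.1, w.2)

theorem cons_add_cons (M N : Multiset LType) (v w : WEnv) :
    cons M v + cons N w = cons (M + N) (v + w) :=
  Prod.ext (TEnv.cons_add_cons M N v.1 w.1) rfl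

theorem cons_inj {M N : Multiset LType} {v w : WEnv} : cons M v = cons N w ↔ M = N ∧ v = w := by
  simp only [cons, Prod.ext_iff, TEnv.cons_inj, and_assoc]

theorem exists_eq_cons (w : WEnv) : ∃ M v, w = cons M v := by
  obtain ⟨M, Δ, h⟩ := w.1.exists_eq_cons
  exact ⟨M, (Δ, w.2), Prod.ext h rfl⟩

/-- `TEnv.insertZero` on weighted environments, with the weight kept. -/
def weaken (d : ℕ) : WEnv →+ WEnv := (TEnv.insertZero d).prodMap (AddMonoidHom.id ℕ)

theorem weaken_zero (w : WEnv) : weaken 0 w = cons 0 w :=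
  Prod.ext (TEnv.insertZero_zero w.1) rfl

theorem weaken_succ_cons (d : ℕ) (M : Multiset LType) (w : WEnv) :
    weaken (d + 1) (cons M w) = cons M (weaken d w) :=
  Prod.ext (TEnv.insertZero_succ_cons d M w.1) rfl

theorem weaken_zero_mk (d k : ℕ) : weaken d (0, k) = (0, k) :=
  Prod.ext (map_zero (TEnv.insertZero d)) rfl

end WEnv

/-- The extension of an additive set-valued function to sets, by unions. It turns an operation on
single typings into one on sets of typings that commutes with the rule `many`. -/
def bindAddHom {α β : Type*} [AddZeroClass α] [AddZeroClass β] (f : α →+ Set β) :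
    Set α →+ Set β where
  toFun A := ⋃ a ∈ A, f a
  map_zero' := by simp only [Set.mem_zero, Set.iUnion_iUnion_eq_left, map_zero]
  map_add' A B := by
    rw [← Set.image2_add, Set.biUnion_image2]
    simp only [map_add, Set.iUnion₂_add, Set.add_iUnion₂]
    exact Set.iUnion₂_comm _

theorem bindAddHom_apply {α β : Type*} [AddZeroClass α] [AddZeroClass β] (f : α →+ Set β)
    (A : Set α) : bindAddHom f A = ⋃ a ∈ A, f a := rfl

/-- The possible meanings of a checkers term: for each linear type, the weighted environments in
which the term has that type. -/
abbrev Interp : Type := LType → Set WEnv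

namespace Interp

variable (p : Player) (d x : ℕ) (T U : Interp)

/-- The rule `many`: the weighted environments in which a term with meaning `U` has a given multi
type. -/
def many : Multiset LType →+ Set WEnv where
  toFun M := (M.map U).sum
  map_zero' := by simp
  map_add' := by simp

/-- The meaning of a variable, given by the rule `ax`. -/
def var : Interp := fun L => {(TEnv.single x L, 0)}

/-- The meaning of an abstraction in terms of that of its body, given by the rule `λ`. -/
def lam : Interp
  | .atom => ∅
  | .arrow M p' _ L => {w | p' = p ∧ WEnv.cons M w ∈ T L}

/-- The meaning of an application in terms of those of its two subterms, given by the rule `@`. -/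
def app : Interp := fun L =>
  ⋃ (M : List LType) (p' : Player), T (.arrow M p' p L) + U.many M + {(0, p'.gamma p)}

/-- The meaning of a term weakened by a fresh variable `d`. -/
def weaken : Interp := fun L => WEnv.weaken d '' T L

/-- The typings of `t[x:=u]` that arise from one typing `w` of `t`, where `u` has meaning `U`: the
multi type that `w` assumes for `x` is traded for typings of `u`. -/
def substEnv : WEnv →+ Set WEnv where
  toFun w := {(w.1.erase x, w.2)} + U.many (w.1 x)
  map_zero' := by
    simp only [Prod.fst_zero, Prod.snd_zero, Pi.zero_apply, map_zero, add_zero]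
    rfl
  map_add' v w := by
    simp only [Prod.fst_add, Prod.snd_add, map_add, Pi.add_apply, ← Prod.mk_add_mk,
      ← Set.singleton_add_singleton]
    abel

/-- The meaning of a term with `u` substituted for `x`, where `u` has meaning `U`. -/
def subst : Interp := fun L => bindAddHom (U.substEnv x) (T L)

theorem many_apply (M : Multiset LType) : U.many M = (M.map U).sum := rfl

theorem many_singleton (L : LType) : U.many {L} = U L := by simp [many_apply]

theorem many_cons (L : LType) (M : List LType) :
    U.many ↑(L :: M) = U L + U.many ↑M := by simp [many_apply]

theorem many_weaken (M : Multiset LType) : (U.weaken d).many M = WEnv.weaken d '' U.many M := by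
  rw [many_apply, many_apply, Set.image_multiset_sum, Multiset.map_map]
  rfl

theorem many_subst (M : Multiset LType) :
    (T.subst x U).many M = bindAddHom (U.substEnv x) (T.many M) := by
  rw [many_apply, many_apply, map_multiset_sum, Multiset.map_map]
  rfl

theorem substEnv_apply (w : WEnv) :
    U.substEnv x w = {(w.1.erase x, w.2)} + U.many (w.1 x) := rfl

theorem substEnv_zero_cons (M : Multiset LType) (w : WEnv) :
    U.substEnv 0 (WEnv.cons M w) = {w} + U.many M := rfl

theorem substEnv_zero_mk (k : ℕ) : U.substEnv x (0, k) = {(0, k)} := by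
  simp [substEnv_apply]

theorem substEnv_succ_cons (M : Multiset LType) (w : WEnv) :
    (U.weaken 0).substEnv (x + 1) (WEnv.cons M w) = WEnv.cons M '' U.substEnv x w := by
  have erase_cons : ((WEnv.cons M w).1.erase (x + 1), (WEnv.cons M w).2) =
      WEnv.cons M (w.1.erase x, w.2) :=
    Prod.ext (TEnv.erase_succ_cons x M w.1) rfl
  have multi_cons : (WEnv.cons M w).1 (x + 1) = w.1 x := rfl
  simp only [substEnv_apply, erase_cons, multi_cons, many_weaken, Set.singleton_add,
    Set.image_image, WEnv.weaken_zero, WEnv.cons_add_cons, add_zero]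

theorem weaken_var (n : ℕ) : (var n).weaken d = var (if n < d then n else n + 1) := by
  funext L
  simp only [weaken, var, Set.image_singleton, Set.singleton_eq_singleton_iff]
  exact Prod.ext (TEnv.insertZero_single d n L) rfl

theorem weaken_lam : (T.lam p).weaken d = (T.weaken (d + 1)).lam p := by
  funext L
  cases L with
  | atom => exact Set.image_empty _
  | arrow M p' q L =>
    ext w
    constructor
    · rintro ⟨v, ⟨hp, hv⟩, rfl⟩
      exact ⟨hp, _, hv, WEnv.weaken_succ_cons d M v⟩
    · rintro ⟨hp, v, hv, hvw⟩
      obtain ⟨N, v, rfl⟩ := v.exists_eq_cons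
      rw [WEnv.weaken_succ_cons, WEnv.cons_inj] at hvw
      obtain ⟨rfl, rfl⟩ := hvw
      exact ⟨v, ⟨hp, hv⟩, rfl⟩

theorem weaken_app : (T.app p U).weaken d = (T.weaken d).app p (U.weaken d) := by
  funext L
  simp only [weaken, app, Set.image_iUnion, Set.image_add, Set.image_singleton,
    WEnv.weaken_zero_mk]
  simp only [← many_weaken]

theorem subst_var_self : (var x).subst x U = U := by
  funext L
  have single_self : TEnv.single x L x = {L} := if_pos rfl
  simp only [subst, var, bindAddHom_apply, Set.biUnion_singleton, substEnv_apply,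
    TEnv.erase_single_self, single_self, many_singleton]
  exact zero_add (U L)

theorem subst_var_of_ne {x n : ℕ} (h : n ≠ x) :
    (var n).subst x U = var (if x < n then n - 1 else n) := by
  funext L
  have single_of_ne : TEnv.single n L x = 0 := if_neg h.symm
  simp only [subst, var, bindAddHom_apply, Set.biUnion_singleton, substEnv_apply,
    TEnv.erase_single_of_ne h, single_of_ne, map_zero, add_zero]

theorem subst_lam : (T.lam p).subst x U = (T.subst (x + 1) (U.weaken 0)).lam p := by
  funext L
  cases L with
  | atom => exact Set.biUnion_empty _
  | arrow M p' q L =>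
    ext w
    simp only [subst, lam, bindAddHom_apply, Set.mem_iUnion₂, Set.mem_ofPred_eq]
    constructor
    · rintro ⟨v, ⟨hp, hv⟩, hw⟩
      exact ⟨hp, WEnv.cons M v, hv, substEnv_succ_cons x U M v ▸ Set.mem_image_of_mem _ hw⟩
    · rintro ⟨hp, v, hv, hw⟩
      obtain ⟨N, v, rfl⟩ := v.exists_eq_cons
      rw [substEnv_succ_cons] at hw
      obtain ⟨w', hw', e⟩ := hw
      obtain ⟨rfl, rfl⟩ := WEnv.cons_inj.1 e
      exact ⟨v, ⟨hp, hv⟩, hw'⟩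

theorem subst_app (V : Interp) : (T.app p U).subst x V = (T.subst x V).app p (U.subst x V) := by
  have subst_weight (k : ℕ) : bindAddHom (V.substEnv x) {(0, k)} = {(0, k)} := by
    rw [bindAddHom_apply, Set.biUnion_singleton, substEnv_zero_mk]
  have bind_iUnion {ι : Type} (A : ι → Set WEnv) :
      bindAddHom (V.substEnv x) (⋃ i, A i) = ⋃ i, bindAddHom (V.substEnv x) (A i) := by
    simp only [bindAddHom_apply, Set.biUnion_iUnion]
  funext L
  simp only [subst, app, bind_iUnion, map_add, subst_weight]
  simp only [← many_subst]

theorem app_lam : (T.lam p).app p U = T.subst 0 U := by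
  ext L w
  simp only [app, lam, subst, bindAddHom_apply, Set.mem_iUnion]
  constructor
  · rintro ⟨M, p', hw⟩
    obtain ⟨_, ⟨v, ⟨rfl, hv⟩, δ, hδ, rfl⟩, _, rfl, rfl⟩ := hw
    refine ⟨WEnv.cons M v, hv, v, rfl, δ, hδ, ?_⟩
    simp [Player.gamma]
  · rintro ⟨v, hv, hw⟩
    obtain ⟨M, v, rfl⟩ := v.exists_eq_cons
    rw [substEnv_zero_cons] at hw
    refine ⟨M.toList, p, w, ?_, _, rfl, ?_⟩
    · rw [Multiset.coe_toList]
      exact Set.add_subset_add_right (by simpa using hv) hw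
    · simp [Player.gamma]

variable {T U} {T' U' : Interp}

theorem lam_mono (h : T ≤ T') : T.lam p ≤ T'.lam p
  | .atom => le_rfl
  | .arrow _ _ _ L => fun _ hw => ⟨hw.1, h L hw.2⟩

theorem many_mono (h : U ≤ U') (M : Multiset LType) : U.many M ⊆ U'.many M :=
  Set.multiset_sum_subset_multiset_sum M U U' fun L _ => h L

theorem app_mono (hT : T ≤ T') (hU : U ≤ U') : T.app p U ≤ T'.app p U' := fun L =>
  Set.iUnion₂_mono fun M p' =>
    Set.add_subset_add_right (Set.add_subset_add (hT (.arrow M p' p L)) (many_mono hU M))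

end Interp

namespace CTerm

/-- The interpretation `⟦t⟧⊛` computed by recursion on `t`. -/
def interp : CTerm → Interp
  | .var n => .var n
  | .lam p t => t.interp.lam p
  | .app p t u => t.interp.app p u.interp

theorem nonempty_derivM_iff_mem_many {T : Interp} {t : CTerm}
    (h : ∀ Γ k L, TJ Γ k t L ↔ (Γ, k) ∈ T L) (Γ : TEnv) (k : ℕ) (M : List LType) :
    Nonempty (DerivM Γ k t M) ↔ (Γ, k) ∈ T.many M := by
  induction M generalizing Γ k with
  | nil =>
    rw [Multiset.coe_nil, map_zero, Set.mem_zero, Prod.mk_eq_zero]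
    constructor
    · rintro ⟨⟨⟩⟩
      exact ⟨rfl, rfl⟩
    · rintro ⟨rfl, rfl⟩
      exact ⟨.nil t⟩
  | cons L M ih =>
    rw [Interp.many_cons]
    constructor
    · rintro ⟨_ | ⟨π, μ⟩⟩
      exact Set.add_mem_add ((h _ _ _).1 ⟨π⟩) ((ih _ _).1 ⟨μ⟩)
    · rintro ⟨⟨Γ₁, k₁⟩, h₁, ⟨Γ₂, k₂⟩, h₂, ⟨⟩⟩
      obtain ⟨π⟩ := (h _ _ _).2 h₁
      obtain ⟨μ⟩ := (ih _ _).2 h₂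
      exact ⟨.cons π μ⟩

theorem tj_iff_mem_interp (t : CTerm) (Γ : TEnv) (k : ℕ) (L : LType) :
    TJ Γ k t L ↔ (Γ, k) ∈ t.interp L := by
  induction t generalizing Γ k L with
  | var n =>
    constructor
    · rintro ⟨⟨⟩⟩
      rfl
    · rintro ⟨⟩
      exact ⟨.ax n L⟩
  | lam p t ih =>
    constructor
    · rintro ⟨_ | ⟨_, _, _, π⟩⟩
      exact ⟨rfl, (ih _ _ _).1 ⟨π⟩⟩
    · cases L with
      | atom => exact False.elim
      | arrow M p' q L =>
        rintro ⟨rfl, h⟩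
        obtain ⟨π⟩ := (ih _ _ _).2 h
        exact ⟨.lam p' q M π⟩
  | app q t u iht ihu =>
    have ihM := nonempty_derivM_iff_mem_many ihu
    simp only [interp, Interp.app, Set.mem_iUnion]
    constructor
    · rintro ⟨_ | _ | ⟨π, μ⟩⟩
      refine ⟨_, _, _, Set.add_mem_add ((iht _ _ _).1 ⟨π⟩) ((ihM _ _ _).1 ⟨μ⟩), _, rfl, ?_⟩
      exact Prod.ext (add_zero _) rfl
    · rintro ⟨M, p, _, ⟨⟨Γ₁, k₁⟩, h₁, ⟨Γ₂, k₂⟩, h₂, rfl⟩, _, rfl, e⟩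
      obtain ⟨π⟩ := (iht _ _ _).2 h₁
      obtain ⟨μ⟩ := (ihM _ _ _).2 h₂
      cases e
      rw [add_zero]
      exact ⟨.app π μ⟩

theorem interp_liftAt (t : CTerm) (d : ℕ) : (t.liftAt d).interp = t.interp.weaken d := by
  induction t generalizing d with
  | var n => exact (Interp.weaken_var d n).symm
  | lam p t ih => simp only [liftAt, interp, ih, Interp.weaken_lam]
  | app p t u iht ihu => simp only [liftAt, interp, iht, ihu, Interp.weaken_app]

theorem interp_subst (t : CTerm) (x : ℕ) (u : CTerm) :
    (t.subst x u).interp = t.interp.subst x u.interp := by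
  induction t generalizing x u with
  | var n =>
    by_cases h : n = x
    · subst h
      simp only [subst, interp, if_true, Interp.subst_var_self]
    · simp only [subst, interp, if_neg h, Interp.subst_var_of_ne _ h]
      split_ifs <;> rfl
  | lam p t ih => simp only [subst, interp, ih, interp_liftAt, Interp.subst_lam]
  | app p t s iht ihs => simp only [subst, interp, iht, ihs, Interp.subst_app]

end CTerm

theorem csem_eq_setOf_mem_interp (t : CTerm) :
    CSem t = {x | (x.1, x.2.1) ∈ t.interp x.2.2} :=
  Set.ext fun x => t.tj_iff_mem_interp x.1 x.2.1 x.2.2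

theorem csem_subset_csem_iff {t u : CTerm} : CSem t ⊆ CSem u ↔ t.interp ≤ u.interp := by
  simp only [csem_eq_setOf_mem_interp]
  exact ⟨fun h L w hw => @h (w.1, w.2, L) hw, fun h x hx => h x.2.2 hx⟩

theorem CCtx.interp_fill_mono (C : CCtx) {t u : CTerm} (h : t.interp ≤ u.interp) :
    (C.fill t).interp ≤ (C.fill u).interp := by
  induction C with
  | hole => exact h
  | lam p C ih => exact Interp.lam_mono p ih
  | appL p C s ih => exact Interp.app_mono p ih le_rfl
  | appR p s C ih => exact Interp.app_mono p le_rfl ih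

theorem StepTau.interp_eq {t u : CTerm} (h : StepTau t u) : t.interp = u.interp := by
  unfold StepTau at h
  induction h with
  | root h =>
    obtain ⟨p, t, u⟩ := h
    rw [CTerm.interp_subst, ← Interp.app_lam p]
    rfl
  | lam p _ ih => simp only [CTerm.interp, ih]
  | appL p s _ ih => simp only [CTerm.interp, ih]
  | appR p s _ ih => simp only [CTerm.interp, ih]

end Interpretation

/-- Compatibility and silent β-invariance of the checkers relational interpretation. -/
theorem csem_compatibility_and_silent_invariance :
    (∀ t u : CTerm, CSem t ⊆ CSem u → ∀ C : CCtx, CSem (C.fill t) ⊆ CSem (C.fill u)) ∧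
    (∀ t u : CTerm, StepTau t u → CSem t = CSem u) := by
  constructor
  · intro t u h C
    exact csem_subset_csem_iff.2 (C.interp_fill_mono (csem_subset_csem_iff.1 h))
  · intro t u h
    rw [csem_eq_setOf_mem_interp, csem_eq_setOf_mem_interp, h.interp_eq]
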